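/- For every T > 0 and every δ ∈ (0, 1] there exists a constant C > 0 such that for all n ∈ ℤ³ and all t ∈ [0, T]: | ∑_{n₁, n₂ ∈ ℤ³ : n₁ + n₂ = n, n₁ ≠ n₂, n₁ ≠ −n₂} ∫₀ᵗ (sin((t − t₁)⟨n⟩)/⟨n⟩) ( ∫₀^{t₁} (sin((t − t₂)⟨n⟩)/⟨n⟩) σ_{n₁}(t₁, t₂) σ_{n₂}(t₁, t₂) dt₂ ) dt₁ | ≤ C ⟨n⟩^{−4 + δ}, the double sum being absolutely convergent. -/

import Mathlib

/-- Japanese bracket of a lattice point `n ∈ ℤ³`: `⟨n⟩ = (1 + |n|²)^{1/2}`. -/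
noncomputable def jb (n : Fin 3 → ℤ) : ℝ :=
  Real.sqrt (1 + ∑ i, ((n i : ℝ)) ^ 2)

/-- The wave correlation kernel
`σ_m(t₁, t₂) = ∫₀^{t₂} ⟨m⟩^{−2} sin((t₁ − s)⟨m⟩) sin((t₂ − s)⟨m⟩) ds`. -/
noncomputable def sigK (m : Fin 3 → ℤ) (t₁ t₂ : ℝ) : ℝ :=
  ∫ s in (0:ℝ)..t₂,
    Real.sin ((t₁ - s) * jb m) * Real.sin ((t₂ - s) * jb m) / jb m ^ 2

/-- The summand of the main pairing contribution:
`∫₀ᵗ (sin((t − t₁)⟨n⟩)/⟨n⟩) ( ∫₀^{t₁} (sin((t − t₂)⟨n⟩)/⟨n⟩)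
  σ_{n₁}(t₁, t₂) σ_{n − n₁}(t₁, t₂) dt₂ ) dt₁`. -/
noncomputable def pairingTerm (n : Fin 3 → ℤ) (t : ℝ) (n₁ : Fin 3 → ℤ) : ℝ :=
  ∫ t₁' in (0:ℝ)..t, (Real.sin ((t - t₁') * jb n) / jb n) *
    ∫ t₂' in (0:ℝ)..t₁', (Real.sin ((t - t₂') * jb n) / jb n) *
      (sigK n₁ t₁' t₂' * sigK (n - n₁) t₁' t₂')

open MeasureTheory in
lemma annulus_area (A p : ℝ) (hp : 0 ≤ p) :
    volume {z : Fin 2 → ℝ | A ≤ z 0 ^ 2 + z 1 ^ 2 ∧ z 0 ^ 2 + z 1 ^ 2 ≤ A + p}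
      ≤ ENNReal.ofReal (Real.pi * p) := by
  have hmp := PiLp.volume_preserving_ofLp (Fin 2)
  have hms : MeasurableSet
      {z : Fin 2 → ℝ | A ≤ z 0 ^ 2 + z 1 ^ 2 ∧ z 0 ^ 2 + z 1 ^ 2 ≤ A + p} := by
    simp only [Set.ofPred_and]
    refine MeasurableSet.inter ?_ ?_ <;>
    exact measurableSet_le (by fun_prop) (by fun_prop)
  rw [← hmp.measure_preimage hms.nullMeasurableSet]
  rcases lt_or_ge (A + p) 0 with hneg | hpos
  · have : (WithLp.ofLp ⁻¹'
      {z : Fin 2 → ℝ | A ≤ z 0 ^ 2 + z 1 ^ 2 ∧ z 0 ^ 2 + z 1 ^ 2 ≤ A + p}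
        : Set (EuclideanSpace ℝ (Fin 2))) = ∅ := by
      ext z
      simp only [Set.mem_preimage, Set.mem_ofPred_eq, Set.mem_empty_iff_false, iff_false, not_and]
      intro h1 h2
      nlinarith [sq_nonneg (z.ofLp 0), sq_nonneg (z.ofLp 1)]
    rw [this]; simp
  have hsub : (WithLp.ofLp ⁻¹'
      {z : Fin 2 → ℝ | A ≤ z 0 ^ 2 + z 1 ^ 2 ∧ z 0 ^ 2 + z 1 ^ 2 ≤ A + p}
        : Set (EuclideanSpace ℝ (Fin 2))) ⊆
      Metric.closedBall 0 (Real.sqrt (A + p)) \ Metric.ball 0 (Real.sqrt A) := by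
    intro z hz
    simp only [Set.mem_preimage, Set.mem_ofPred_eq] at hz
    have hn : ‖z‖ = Real.sqrt (z.ofLp 0 ^ 2 + z.ofLp 1 ^ 2) := by
      rw [EuclideanSpace.norm_eq]; simp [Fin.sum_univ_two]
    simp only [Set.mem_sdiff, Metric.mem_closedBall, dist_zero_right, Metric.mem_ball, not_lt, hn]
    exact ⟨Real.sqrt_le_sqrt hz.2, Real.sqrt_le_sqrt hz.1⟩
  refine (measure_mono hsub).trans ?_
  rw [measure_sdiff (Metric.ball_subset_closedBall.trans
      (Metric.closedBall_subset_closedBall (Real.sqrt_le_sqrt (by linarith))))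
      measurableSet_ball.nullMeasurableSet measure_ball_lt_top.ne,
    EuclideanSpace.volume_ball_fin_two, EuclideanSpace.volume_closedBall_fin_two,
    ← ENNReal.ofReal_pow (Real.sqrt_nonneg _), ← ENNReal.ofReal_pow (Real.sqrt_nonneg _),
    ← ENNReal.ofReal_mul (by positivity), ← ENNReal.ofReal_mul (by positivity),
    ← ENNReal.ofReal_sub _ (by positivity)]
  apply ENNReal.ofReal_le_ofReal
  rw [Real.sq_sqrt hpos]
  have hpi := Real.pi_pos
  rcases lt_or_ge A 0 with h | h
  · rw [Real.sqrt_eq_zero_of_nonpos h.le]; nlinarith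
  · rw [Real.sq_sqrt h]; nlinarith

open MeasureTheory in
lemma vol_pi (d A p B q : ℝ) (hd : 0 < d) (hp : 0 ≤ p) (hq : 0 ≤ q) :
    volume {y : Fin 3 → ℝ | (A ≤ y 0 ^ 2 + y 1 ^ 2 + y 2 ^ 2 ∧
        y 0 ^ 2 + y 1 ^ 2 + y 2 ^ 2 ≤ A + p) ∧
      (B ≤ (y 0 - d) ^ 2 + y 1 ^ 2 + y 2 ^ 2 ∧ (y 0 - d) ^ 2 + y 1 ^ 2 + y 2 ^ 2 ≤ B + q)}
      ≤ ENNReal.ofReal (Real.pi * p * ((p + q) / (2 * d))) := by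
  have hmp := (volume_preserving_piFinSuccAbove (fun _ : Fin 3 => ℝ) 0).symm
  have hms : MeasurableSet {y : Fin 3 → ℝ | (A ≤ y 0 ^ 2 + y 1 ^ 2 + y 2 ^ 2 ∧
        y 0 ^ 2 + y 1 ^ 2 + y 2 ^ 2 ≤ A + p) ∧
      (B ≤ (y 0 - d) ^ 2 + y 1 ^ 2 + y 2 ^ 2 ∧ (y 0 - d) ^ 2 + y 1 ^ 2 + y 2 ^ 2 ≤ B + q)} := by
    simp only [Set.ofPred_and]
    refine MeasurableSet.inter (MeasurableSet.inter ?_ ?_) (MeasurableSet.inter ?_ ?_) <;>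
    exact measurableSet_le (by fun_prop) (by fun_prop)
  rw [← hmp.measure_preimage hms.nullMeasurableSet]
  have hms2 := hmp.measurable hms
  rw [show (volume : Measure (ℝ × (Fin 2 → ℝ))) = (volume : Measure ℝ).prod volume from rfl]
  rw [Measure.prod_apply hms2]
  set I := Set.Icc ((A - B - q + d ^ 2) / (2 * d)) ((A + p - B + d ^ 2) / (2 * d)) with hI
  have hle : ∀ h : ℝ, volume (Prod.mk h ⁻¹'
      ((MeasurableEquiv.piFinSuccAbove (fun _ : Fin 3 => ℝ) 0).symm ⁻¹'
      {y : Fin 3 → ℝ | (A ≤ y 0 ^ 2 + y 1 ^ 2 + y 2 ^ 2 ∧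
        y 0 ^ 2 + y 1 ^ 2 + y 2 ^ 2 ≤ A + p) ∧
      (B ≤ (y 0 - d) ^ 2 + y 1 ^ 2 + y 2 ^ 2 ∧ (y 0 - d) ^ 2 + y 1 ^ 2 + y 2 ^ 2 ≤ B + q)}))
      ≤ I.indicator (fun _ => ENNReal.ofReal (Real.pi * p)) h := by
    intro h
    have hmem : ∀ z : Fin 2 → ℝ, z ∈ (Prod.mk h ⁻¹'
      ((MeasurableEquiv.piFinSuccAbove (fun _ : Fin 3 => ℝ) 0).symm ⁻¹'
      {y : Fin 3 → ℝ | (A ≤ y 0 ^ 2 + y 1 ^ 2 + y 2 ^ 2 ∧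
        y 0 ^ 2 + y 1 ^ 2 + y 2 ^ 2 ≤ A + p) ∧
      (B ≤ (y 0 - d) ^ 2 + y 1 ^ 2 + y 2 ^ 2 ∧ (y 0 - d) ^ 2 + y 1 ^ 2 + y 2 ^ 2 ≤ B + q)})) ↔
       (A ≤ h ^ 2 + z 0 ^ 2 + z 1 ^ 2 ∧ h ^ 2 + z 0 ^ 2 + z 1 ^ 2 ≤ A + p) ∧
      (B ≤ (h - d) ^ 2 + z 0 ^ 2 + z 1 ^ 2 ∧ (h - d) ^ 2 + z 0 ^ 2 + z 1 ^ 2 ≤ B + q) := by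
      intro z
      rfl
    by_cases hh : h ∈ I
    · rw [Set.indicator_of_mem hh]
      refine le_trans (measure_mono ?_) (annulus_area (A - h ^ 2) p hp)
      intro z hz
      rw [hmem] at hz
      obtain ⟨⟨h1, h2⟩, -⟩ := hz
      constructor <;> linarith
    · rw [Set.indicator_of_notMem hh]
      rw [nonpos_iff_eq_zero]
      convert measure_empty (μ := (volume : Measure (Fin 2 → ℝ)))
      ext z
      rw [hmem]
      simp only [Set.mem_empty_iff_false, iff_false]
      rintro ⟨⟨h1, h2⟩, h3, h4⟩
      apply hh
      rw [hI, Set.mem_Icc, div_le_iff₀ (by positivity), le_div_iff₀ (by positivity)]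
      constructor <;> nlinarith
  refine (lintegral_mono hle).trans ?_
  rw [lintegral_indicator_const measurableSet_Icc, Real.volume_Icc,
    ← ENNReal.ofReal_mul (by positivity)]
  apply ENNReal.ofReal_le_ofReal
  apply le_of_eq
  field_simp
  ring

open MeasureTheory in
lemma vol_euc (v : EuclideanSpace ℝ (Fin 3)) (A p B q : ℝ) (hd : 0 < ‖v‖) (hp : 0 ≤ p) (hq : 0 ≤ q) :
    volume {y : EuclideanSpace ℝ (Fin 3) | (A ≤ ‖y‖ ^ 2 ∧ ‖y‖ ^ 2 ≤ A + p) ∧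
      (B ≤ ‖y - v‖ ^ 2 ∧ ‖y - v‖ ^ 2 ≤ B + q)}
      ≤ ENNReal.ofReal (Real.pi * p * ((p + q) / (2 * ‖v‖))) := by
  set w : EuclideanSpace ℝ (Fin 3) := WithLp.toLp 2 ![‖v‖, 0, 0] with hw
  have hwn : ‖w‖ = ‖v‖ := by
    rw [EuclideanSpace.norm_eq, hw]; simp [Fin.sum_univ_three]
  set R := (ℝ ∙ (w - v))ᗮ.reflection with hR
  have hRw : R w = v := Submodule.reflection_sub hwn
  have hms : MeasurableSet {y : EuclideanSpace ℝ (Fin 3) | (A ≤ ‖y‖ ^ 2 ∧ ‖y‖ ^ 2 ≤ A + p) ∧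
      (B ≤ ‖y - v‖ ^ 2 ∧ ‖y - v‖ ^ 2 ≤ B + q)} := by
    simp only [Set.ofPred_and]
    refine MeasurableSet.inter (MeasurableSet.inter ?_ ?_) (MeasurableSet.inter ?_ ?_) <;>
    exact measurableSet_le (by fun_prop) (by fun_prop)
  have hmp := R.measurePreserving.comp (PiLp.volume_preserving_toLp (Fin 3))
  rw [← hmp.measure_preimage hms.nullMeasurableSet]
  refine le_trans (measure_mono ?_) (vol_pi ‖v‖ A p B q hd hp hq)
  intro y hy
  simp only [Set.mem_preimage, Set.mem_ofPred_eq, Function.comp] at hy ⊢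
  have e1 : ‖R (WithLp.toLp 2 y)‖ ^ 2 = y 0 ^ 2 + y 1 ^ 2 + y 2 ^ 2 := by
    rw [LinearIsometryEquiv.norm_map, EuclideanSpace.norm_sq_eq]
    simp [Fin.sum_univ_three]
  have e2 : ‖R (WithLp.toLp 2 y) - v‖ ^ 2 = (y 0 - ‖v‖) ^ 2 + y 1 ^ 2 + y 2 ^ 2 := by
    rw [← hRw, ← map_sub, LinearIsometryEquiv.norm_map, EuclideanSpace.norm_sq_eq, hRw]
    simp [Fin.sum_univ_three, hw]
  rw [e1, e2] at hy
  exact hy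

lemma sq_cmp {a b : ℝ} (h : a ^ 2 ≤ b ^ 2) (hb : 0 ≤ b) : a ≤ b :=
  (le_abs_self a).trans (abs_le_of_sq_le_sq h hb)

/-- A lattice point as a Euclidean vector. -/
noncomputable def emb (x : Fin 3 → ℤ) : EuclideanSpace ℝ (Fin 3) :=
  WithLp.toLp 2 (fun i => (x i : ℝ))

lemma emb_sub (x y : Fin 3 → ℤ) : emb (x - y) = emb x - emb y := by
  ext i; simp [emb]

lemma emb_add (x y : Fin 3 → ℤ) : emb (x + y) = emb x + emb y := by
  ext i; simp [emb]

lemma jb_eq (x : Fin 3 → ℤ) : jb x = Real.sqrt (1 + ‖emb x‖ ^ 2) := by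
  rw [EuclideanSpace.norm_sq_eq]; simp [jb, emb]

lemma jb_sq (x : Fin 3 → ℤ) : jb x ^ 2 = 1 + ‖emb x‖ ^ 2 := by
  rw [jb_eq, Real.sq_sqrt (by positivity)]

lemma jb_nonneg (x : Fin 3 → ℤ) : 0 ≤ jb x := Real.sqrt_nonneg _

lemma one_le_jb (x : Fin 3 → ℤ) : 1 ≤ jb x := by
  rw [jb_eq]; exact Real.one_le_sqrt.2 (by nlinarith [sq_nonneg ‖emb x‖])

lemma norm_le_jb (x : Fin 3 → ℤ) : ‖emb x‖ ≤ jb x := by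
  apply sq_cmp _ (jb_nonneg x)
  rw [jb_sq]; linarith

lemma jb_le (x : Fin 3 → ℤ) : jb x ≤ 1 + ‖emb x‖ := by
  apply sq_cmp _ (by positivity)
  rw [jb_sq]; nlinarith [norm_nonneg (emb x)]

lemma jb_neg (x : Fin 3 → ℤ) : jb (-x) = jb x := by simp [jb]

lemma jb_add (x y : Fin 3 → ℤ) : jb (x + y) ≤ jb x + jb y := by
  apply sq_cmp _ (add_nonneg (jb_nonneg x) (jb_nonneg y))
  have h1 := norm_add_le (emb x) (emb y)
  have h2 := pow_le_pow_left₀ (norm_nonneg _) h1 2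
  have h3 := mul_le_mul (norm_le_jb x) (norm_le_jb y) (norm_nonneg _) (jb_nonneg x)
  rw [jb_sq, emb_add]
  nlinarith [jb_sq x, jb_sq y]

lemma jb_tri1 (n x : Fin 3 → ℤ) : jb n ≤ jb x + jb (n - x) := by
  have := jb_add x (n - x); simpa using this

lemma jb_tri2 (n x : Fin 3 → ℤ) : jb (n - x) ≤ jb n + jb x := by
  have := jb_add n (-x); rw [jb_neg] at this; rwa [sub_eq_add_neg]

lemma jb_tri3 (n x : Fin 3 → ℤ) : jb x ≤ jb n + jb (n - x) := by
  have := jb_tri2 n (n - x); simpa using this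

lemma one_le_norm_emb (n : Fin 3 → ℤ) (hn : n ≠ 0) : 1 ≤ ‖emb n‖ := by
  obtain ⟨i, hi⟩ := Function.ne_iff.1 hn
  have h1 : (1 : ℝ) ≤ |(n i : ℝ)| := by
    exact_mod_cast Int.one_le_abs hi
  refine h1.trans ?_
  have := PiLp.norm_apply_le (emb n) i
  simpa [emb] using this

/-- unit cube at a lattice point -/
def ucube (x : Fin 3 → ℤ) : Set (EuclideanSpace ℝ (Fin 3)) :=
  WithLp.ofLp ⁻¹' (Set.univ.pi fun i => Set.Ico (x i : ℝ) (x i + 1))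

lemma ucube_meas (x : Fin 3 → ℤ) : MeasurableSet (ucube x) := by
  apply (PiLp.volume_preserving_ofLp (Fin 3)).measurable
  exact MeasurableSet.univ_pi fun i => measurableSet_Ico

open MeasureTheory in
lemma ucube_vol (x : Fin 3 → ℤ) : volume (ucube x) = 1 := by
  unfold ucube
  rw [(PiLp.volume_preserving_ofLp (Fin 3)).measure_preimage
    (MeasurableSet.univ_pi fun i => measurableSet_Ico).nullMeasurableSet, Real.volume_pi_Ico]
  simp

lemma ucube_disj (x y : Fin 3 → ℤ) (h : x ≠ y) : Disjoint (ucube x) (ucube y) := by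
  rw [Set.disjoint_left]
  intro z hx hy
  apply h
  ext i
  have h1 := hx i (Set.mem_univ i)
  have h2 := hy i (Set.mem_univ i)
  rw [← (Int.floor_eq_iff.2 ⟨h1.1, h1.2⟩), ← (Int.floor_eq_iff.2 ⟨h2.1, h2.2⟩)]

lemma ucube_dist (x : Fin 3 → ℤ) (y : EuclideanSpace ℝ (Fin 3)) (hy : y ∈ ucube x) :
    ‖y - emb x‖ ≤ 2 := by
  apply sq_cmp _ (by norm_num)
  rw [EuclideanSpace.norm_sq_eq]
  have : ∀ i, ‖(y - emb x).ofLp i‖ ^ 2 ≤ 1 := by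
    intro i
    have h1 := hy i (Set.mem_univ i)
    have h2 : (y - emb x).ofLp i = y.ofLp i - x i := by simp [emb]
    rw [h2, Real.norm_eq_abs, sq_abs]
    have := h1.1; have := h1.2
    nlinarith
  rw [Fin.sum_univ_three]
  linarith [this 0, this 1, this 2]

lemma shell_bound (j : ℕ) (hj : 1 ≤ j) (x : Fin 3 → ℤ) (hx : ⌊jb x⌋₊ = j) (N : ℝ) (hN : 0 ≤ N)
    (h : |N - ‖emb x‖| ≤ 2) :
    (max ((j : ℝ) - 3) 0) ^ 2 ≤ N ^ 2 ∧ N ^ 2 ≤ (max ((j : ℝ) - 3) 0) ^ 2 + 16 * j := by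
  rw [Nat.floor_eq_iff (jb_nonneg x)] at hx
  have h1 := norm_le_jb x
  have h2 := jb_le x
  rw [abs_le] at h
  have hlo : (j : ℝ) - 3 ≤ N := by linarith
  have hhi : N ≤ j + 3 := by linarith
  constructor
  · exact pow_le_pow_left₀ (le_max_right _ _) (max_le hlo hN) 2
  · have h3 : N ^ 2 ≤ (j + 3 : ℝ) ^ 2 := pow_le_pow_left₀ hN hhi 2
    refine h3.trans ?_
    rcases le_or_gt 3 j with h4 | h4
    · have : (3 : ℝ) ≤ j := by exact_mod_cast h4
      rw [max_eq_left (by linarith)]; nlinarith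
    · interval_cases j <;> norm_num

open MeasureTheory in
lemma count_aux (n : Fin 3 → ℤ) (hn : n ≠ 0) (j k : ℕ) (hj : 1 ≤ j) (hk : 1 ≤ k) (hjk : j ≤ k) :
    (({x : Fin 3 → ℤ | ⌊jb x⌋₊ = j ∧ ⌊jb (n - x)⌋₊ = k}.encard : ENat) : ENNReal) ≤
      ENNReal.ofReal (256 * Real.pi * j * k / ‖emb n‖) := by
  have hn1 := one_le_norm_emb n hn
  set S := {x : Fin 3 → ℤ | ⌊jb x⌋₊ = j ∧ ⌊jb (n - x)⌋₊ = k} with hS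
  have h1 : ((S.encard : ENat) : ENNReal) = ∑' x : S, volume (ucube x) := by
    rw [← ENNReal.tsum_set_one]; simp [ucube_vol]
  rw [h1, ← measure_iUnion]
  · refine le_trans (measure_mono ?_) ((vol_euc (emb n) ((max ((j : ℝ) - 3) 0) ^ 2) (16 * j)
      ((max ((k : ℝ) - 3) 0) ^ 2) (16 * k) (by linarith) (by positivity) (by positivity)).trans ?_)
    · intro y hy
      obtain ⟨⟨x, hx⟩, hyx⟩ := Set.mem_iUnion.1 hy
      have hd := ucube_dist x y hyx
      refine ⟨shell_bound j hj x hx.1 _ (norm_nonneg _) ?_,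
        shell_bound k hk (n - x) hx.2 _ (norm_nonneg _) ?_⟩
      · exact (abs_norm_sub_norm_le _ _).trans hd
      · rw [emb_sub, norm_sub_rev (emb n)]
        refine (abs_norm_sub_norm_le _ _).trans ?_
        simpa using hd
    · apply ENNReal.ofReal_le_ofReal
      have hjk' : (j : ℝ) ≤ k := by exact_mod_cast hjk
      have hpi := Real.pi_pos
      have e : Real.pi * (16 * j) * ((16 * j + 16 * k) / (2 * ‖emb n‖))
        = 128 * Real.pi * j * (j + k) / ‖emb n‖ := by field_simp; ring
      rw [e]
      gcongr ?_ / _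
      have : 0 ≤ Real.pi * j := by positivity
      nlinarith
  · intro x y hxy
    exact ucube_disj _ _ (fun h => hxy (Subtype.ext h))
  · intro x; exact ucube_meas _

lemma count (n : Fin 3 → ℤ) (hn : n ≠ 0) (j k : ℕ) (hj : 1 ≤ j) (hk : 1 ≤ k) :
    (({x : Fin 3 → ℤ | ⌊jb x⌋₊ = j ∧ ⌊jb (n - x)⌋₊ = k}.encard : ENat) : ENNReal) ≤
      ENNReal.ofReal (256 * Real.pi * j * k / ‖emb n‖) := by
  rcases le_total j k with h | h
  · exact count_aux n hn j k hj hk h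
  · have h1 := count_aux n hn k j hk hj h
    have h2 : {x : Fin 3 → ℤ | ⌊jb x⌋₊ = j ∧ ⌊jb (n - x)⌋₊ = k} =
        (fun x => n - x) '' {x : Fin 3 → ℤ | ⌊jb x⌋₊ = k ∧ ⌊jb (n - x)⌋₊ = j} := by
      ext x
      constructor
      · rintro ⟨hx1, hx2⟩
        exact ⟨n - x, ⟨hx2, by simpa using hx1⟩, by simp⟩
      · rintro ⟨y, ⟨hy1, hy2⟩, rfl⟩
        exact ⟨hy2, by simpa using hy1⟩
    rw [h2, Function.Injective.encard_image (fun x y hxy => by simpa using hxy)]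
    refine h1.trans (le_of_eq ?_)
    congr 1; ring

lemma osc_bound (T τ θ κ : ℝ) (h0 : 0 ≤ τ) (hT : τ ≤ T) :
    |∫ u in (0:ℝ)..τ, u ^ 2 * Real.sin (θ - κ * u)| ≤ (T ^ 3 + 3 * T ^ 2) * (1 / (1 + |κ|)) := by
  set I := ∫ u in (0:ℝ)..τ, u ^ 2 * Real.sin (θ - κ * u) with hI
  have hT0 : 0 ≤ T := h0.trans hT
  have b1 : |I| ≤ T ^ 3 := by
    have := intervalIntegral.norm_integral_le_of_norm_le_const (a := 0) (b := τ) (C := T ^ 2)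
      (f := fun u => u ^ 2 * Real.sin (θ - κ * u)) (by
        intro u hu
        rw [Set.uIoc_of_le h0] at hu
        rw [norm_mul, Real.norm_eq_abs, Real.norm_eq_abs, abs_of_nonneg (sq_nonneg u)]
        have h1 := Real.abs_sin_le_one (θ - κ * u)
        have h2 : u ^ 2 ≤ T ^ 2 := pow_le_pow_left₀ hu.1.le (hu.2.trans hT) 2
        calc u ^ 2 * |Real.sin (θ - κ * u)| ≤ u ^ 2 * 1 := by gcongr
          _ ≤ T ^ 2 := by linarith)
    rw [Real.norm_eq_abs, sub_zero, abs_of_nonneg h0] at this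
    refine this.trans ?_
    have : T ^ 2 * τ ≤ T ^ 2 * T := by gcongr
    linarith [this, (by ring : T ^ 2 * T = T ^ 3)]
  have b2 : |∫ u in (0:ℝ)..τ, 2 * u * Real.cos (θ - κ * u)| ≤ 2 * T ^ 2 := by
    have := intervalIntegral.norm_integral_le_of_norm_le_const (a := 0) (b := τ) (C := 2 * T)
      (f := fun u => 2 * u * Real.cos (θ - κ * u)) (by
        intro u hu
        rw [Set.uIoc_of_le h0] at hu
        have hu0 := hu.1
        rw [norm_mul, Real.norm_eq_abs, Real.norm_eq_abs, abs_of_nonneg (by linarith : 0 ≤ 2 * u)]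
        have h1 := Real.abs_cos_le_one (θ - κ * u)
        calc 2 * u * |Real.cos (θ - κ * u)| ≤ 2 * u * 1 := by gcongr
          _ ≤ 2 * T := by linarith [hu.2])
    rw [Real.norm_eq_abs, sub_zero, abs_of_nonneg h0] at this
    refine this.trans ?_
    have : 2 * T * τ ≤ 2 * T * T := by gcongr
    linarith [this, (by ring : 2 * T * T = 2 * T ^ 2)]
  have b3 : κ * I = τ ^ 2 * Real.cos (θ - κ * τ)
      - ∫ u in (0:ℝ)..τ, 2 * u * Real.cos (θ - κ * u) := by
    have hd : ∀ u ∈ Set.uIcc 0 τ, HasDerivAt (fun u => u ^ 2 * Real.cos (θ - κ * u))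
        (2 * u * Real.cos (θ - κ * u) + κ * (u ^ 2 * Real.sin (θ - κ * u))) u := by
      intro u _
      have h1 : HasDerivAt (fun u : ℝ => θ - κ * u) (-κ) u := by
        simpa using ((hasDerivAt_id u).const_mul κ).const_sub θ
      have h2 := (hasDerivAt_pow 2 u).mul h1.cos
      refine HasDerivAt.congr_deriv h2 ?_
      push_cast; ring
    have := intervalIntegral.integral_eq_sub_of_hasDerivAt hd
      (Continuous.intervalIntegrable (by fun_prop) _ _)
    rw [intervalIntegral.integral_add (Continuous.intervalIntegrable (by fun_prop) _ _)
      (Continuous.intervalIntegrable (by fun_prop) _ _),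
      intervalIntegral.integral_const_mul] at this
    rw [hI]
    simp only [ne_eq, OfNat.ofNat_ne_zero, not_false_eq_true, zero_pow, zero_mul, sub_zero] at this
    linarith
  have b4 : |κ| * |I| ≤ 3 * T ^ 2 := by
    rw [← abs_mul, b3]
    have h1 : |τ ^ 2 * Real.cos (θ - κ * τ)| ≤ T ^ 2 := by
      rw [abs_mul, abs_of_nonneg (sq_nonneg τ)]
      have h1 := Real.abs_cos_le_one (θ - κ * τ)
      calc τ ^ 2 * |Real.cos (θ - κ * τ)| ≤ τ ^ 2 * 1 := by gcongr
        _ ≤ T ^ 2 := by rw [mul_one]; gcongr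
    have := abs_sub (τ ^ 2 * Real.cos (θ - κ * τ)) (∫ u in (0:ℝ)..τ, 2 * u * Real.cos (θ - κ * u))
    linarith
  rw [mul_one_div, le_div_iff₀ (by positivity)]
  nlinarith

/-- The remainder in the closed form of `sigK`. -/
noncomputable def sigE (b t₁ t₂ : ℝ) : ℝ :=
  (Real.sin ((t₁ - t₂) * b) - Real.sin ((t₁ + t₂) * b)) / (4 * b ^ 3)

lemma sigK_eq (m : Fin 3 → ℤ) (t₁ t₂ : ℝ) :
    sigK m t₁ t₂ = t₂ * Real.cos ((t₁ - t₂) * jb m) / (2 * jb m ^ 2) + sigE (jb m) t₁ t₂ := by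
  unfold sigK sigE
  have hb : 0 < jb m := lt_of_lt_of_le one_pos (one_le_jb m)
  set b := jb m
  have hd : ∀ s ∈ Set.uIcc 0 t₂, HasDerivAt (fun s => (s * (Real.cos ((t₁ - t₂) * b) / 2)
      + Real.sin ((t₁ + t₂ - 2 * s) * b) / (4 * b)) / b ^ 2)
      (Real.sin ((t₁ - s) * b) * Real.sin ((t₂ - s) * b) / b ^ 2) s := by
    intro s _
    have h1 : HasDerivAt (fun s : ℝ => (t₁ + t₂ - 2 * s) * b) (-(2 * b)) s := by
      have := (((hasDerivAt_id s).const_mul 2).const_sub (t₁ + t₂)).mul_const b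
      simpa using this
    have h2 := ((((hasDerivAt_id s).mul_const (Real.cos ((t₁ - t₂) * b) / 2))).add
      (h1.sin.div_const (4 * b))).div_const (b ^ 2)
    refine HasDerivAt.congr_deriv h2 ?_
    have e1 : (t₁ - t₂) * b = (t₁ - s) * b - (t₂ - s) * b := by ring
    have e2 : (t₁ + t₂ - 2 * s) * b = (t₁ - s) * b + (t₂ - s) * b := by ring
    rw [e1, e2, Real.cos_sub, Real.cos_add]
    field_simp
    ring
  rw [intervalIntegral.integral_eq_sub_of_hasDerivAt hd
    (Continuous.intervalIntegrable (by fun_prop) _ _)]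
  have e3 : (t₁ + t₂ - 2 * t₂) * b = (t₁ - t₂) * b := by ring
  have e4 : (t₁ + t₂ - 2 * 0) * b = (t₁ + t₂) * b := by ring
  rw [e3, e4]
  field_simp
  ring

lemma sigE_abs (b t₁ t₂ : ℝ) (hb : 0 < b) : |sigE b t₁ t₂| ≤ 1 / (2 * b ^ 3) := by
  unfold sigE
  rw [abs_div, abs_of_pos (by positivity : 0 < 4 * b ^ 3), div_le_div_iff₀ (by positivity) (by positivity)]
  have h1 := Real.abs_sin_le_one ((t₁ - t₂) * b)
  have h2 := Real.abs_sin_le_one ((t₁ + t₂) * b)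
  have h3 := abs_sub (Real.sin ((t₁ - t₂) * b)) (Real.sin ((t₁ + t₂) * b))
  have h4 : |Real.sin ((t₁ - t₂) * b) - Real.sin ((t₁ + t₂) * b)| ≤ 2 := by linarith
  have hb3 : 0 < b ^ 3 := by positivity
  nlinarith

/-- Dominating lattice function. -/
noncomputable def FF (s r : ℝ) (n x : Fin 3 → ℤ) : ℝ :=
  1 / (jb x ^ 2 * jb (n - x) ^ 2) * (1 / (1 + |jb n + s * jb x + r * jb (n - x)|))

lemma sin_cos_cos (A B C : ℝ) : Real.sin A * Real.cos B * Real.cos C =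
    (Real.sin (A + B + C) + Real.sin (A + B - C) + Real.sin (A - B + C) + Real.sin (A - B - C)) / 4 := by
  simp only [Real.sin_add, Real.sin_sub, Real.cos_add, Real.cos_sub]
  ring

lemma rest_bound (T b c M N E G : ℝ) (hT : 0 ≤ T) (hb : 1 ≤ b) (hc : 1 ≤ c)
    (hM : |M| ≤ T / (2 * b ^ 2)) (hN : |N| ≤ T / (2 * c ^ 2))
    (hE : |E| ≤ 1 / (2 * b ^ 3)) (hG : |G| ≤ 1 / (2 * c ^ 3)) :
    |(M + E) * (N + G) - M * N| ≤ (T + 1) * (1 / (b ^ 2 * c ^ 2)) * (1 / b + 1 / c) := by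
  have hb0 : 0 < b := by linarith
  have hc0 : 0 < c := by linarith
  have h1 : |(M + E) * (N + G) - M * N| ≤ |M| * |G| + |E| * |N| + |E| * |G| := by
    have : (M + E) * (N + G) - M * N = M * G + E * N + E * G := by ring
    rw [this, ← abs_mul, ← abs_mul, ← abs_mul]
    exact (abs_add_le _ _).trans (add_le_add_left (abs_add_le _ _) _)
  have h2 : |M| * |G| ≤ T / (2 * b ^ 2) * (1 / (2 * c ^ 3)) := by gcongr
  have h3 : |E| * |N| ≤ 1 / (2 * b ^ 3) * (T / (2 * c ^ 2)) := by gcongr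
  have h4 : |E| * |G| ≤ 1 / (2 * b ^ 3) * (1 / (2 * c ^ 3)) := by gcongr
  refine h1.trans ((add_le_add (add_le_add h2 h3) h4).trans ?_)
  have e : T / (2 * b ^ 2) * (1 / (2 * c ^ 3)) + 1 / (2 * b ^ 3) * (T / (2 * c ^ 2))
      + 1 / (2 * b ^ 3) * (1 / (2 * c ^ 3))
      = (T * b + T * c + 1) / 4 / (b ^ 3 * c ^ 3) := by field_simp; ring
  have e' : (T + 1) * (1 / (b ^ 2 * c ^ 2)) * (1 / b + 1 / c)
      = (T + 1) * (b + c) / (b ^ 3 * c ^ 3) := by field_simp; ring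
  rw [e, e']
  gcongr
  nlinarith [mul_nonneg hT hb0.le, mul_nonneg hT hc0.le]

lemma inner_bound (T : ℝ) (n x : Fin 3 → ℤ) (t t₁ : ℝ) (h0 : 0 ≤ t₁) (hT : t₁ ≤ T) :
    |∫ t₂' in (0:ℝ)..t₁, (Real.sin ((t - t₂') * jb n) / jb n) *
      (sigK x t₁ t₂' * sigK (n - x) t₁ t₂')| ≤
    (T ^ 3 + 6 * T ^ 2 + 3 * T) / jb n * (FF 1 1 n x + FF 1 (-1) n x + FF (-1) 1 n x + FF (-1) (-1) n x) := by
  have hT0 : 0 ≤ T := h0.trans hT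
  have ha := one_le_jb n
  have hb := one_le_jb x
  have hc := one_le_jb (n - x)
  have t1 := jb_tri1 n x
  have t2 := jb_tri2 n x
  have t3 := jb_tri3 n x
  simp only [sigK_eq]
  unfold FF
  set a := jb n
  set b := jb x
  set c := jb (n - x)
  have ha0 : 0 < a := by linarith
  have hb0 : 0 < b := by linarith
  have hc0 : 0 < c := by linarith
  set R : ℝ → ℝ := fun u => Real.sin ((t - u) * a) / a *
    ((u * Real.cos ((t₁ - u) * b) / (2 * b ^ 2) + sigE b t₁ u) *
      (u * Real.cos ((t₁ - u) * c) / (2 * c ^ 2) + sigE c t₁ u) -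
      u * Real.cos ((t₁ - u) * b) / (2 * b ^ 2) * (u * Real.cos ((t₁ - u) * c) / (2 * c ^ 2))) with hR
  have hRc : Continuous R := by
    rw [hR]; unfold sigE; fun_prop
  set O : ℝ → ℝ → ℝ → ℝ := fun s r u =>
    u ^ 2 * Real.sin ((t * a + s * (t₁ * b) + r * (t₁ * c)) - (a + s * b + r * c) * u) with hO
  have hOc : ∀ s r, Continuous (O s r) := by
    intro s r; rw [hO]; fun_prop
  have hdec : ∀ u, Real.sin ((t - u) * a) / a *
      ((u * Real.cos ((t₁ - u) * b) / (2 * b ^ 2) + sigE b t₁ u) *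
      (u * Real.cos ((t₁ - u) * c) / (2 * c ^ 2) + sigE c t₁ u)) =
      1 / (16 * a * b ^ 2 * c ^ 2) * (O 1 1 u + O 1 (-1) u + O (-1) 1 u + O (-1) (-1) u) + R u := by
    intro u
    have h := sin_cos_cos ((t - u) * a) ((t₁ - u) * b) ((t₁ - u) * c)
    have e1 : (t - u) * a + (t₁ - u) * b + (t₁ - u) * c =
      (t * a + 1 * (t₁ * b) + 1 * (t₁ * c)) - (a + 1 * b + 1 * c) * u := by ring
    have e2 : (t - u) * a + (t₁ - u) * b - (t₁ - u) * c =
      (t * a + 1 * (t₁ * b) + (-1) * (t₁ * c)) - (a + 1 * b + (-1) * c) * u := by ring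
    have e3 : (t - u) * a - (t₁ - u) * b + (t₁ - u) * c =
      (t * a + (-1) * (t₁ * b) + 1 * (t₁ * c)) - (a + (-1) * b + 1 * c) * u := by ring
    have e4 : (t - u) * a - (t₁ - u) * b - (t₁ - u) * c =
      (t * a + (-1) * (t₁ * b) + (-1) * (t₁ * c)) - (a + (-1) * b + (-1) * c) * u := by ring
    rw [e1, e2, e3, e4] at h
    have h' : O 1 1 u + O 1 (-1) u + O (-1) 1 u + O (-1) (-1) u =
      4 * u ^ 2 * (Real.sin ((t - u) * a) * Real.cos ((t₁ - u) * b) * Real.cos ((t₁ - u) * c)) := by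
      rw [h, hO]; ring
    rw [h', hR]
    field_simp
    ring
  have hint : ∀ f : ℝ → ℝ, Continuous f → IntervalIntegrable f MeasureTheory.volume 0 t₁ :=
    fun f hf => hf.intervalIntegrable _ _
  have c11 := hOc 1 1
  have c12 := hOc 1 (-1)
  have c21 := hOc (-1) 1
  have c22 := hOc (-1) (-1)
  simp only [hdec]
  rw [intervalIntegral.integral_add (hint _ (by fun_prop)) (hint _ hRc),
    intervalIntegral.integral_const_mul,
    intervalIntegral.integral_add (hint _ (by fun_prop)) (hint _ c22),
    intervalIntegral.integral_add (hint _ (by fun_prop)) (hint _ c21),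
    intervalIntegral.integral_add (hint _ c11) (hint _ c12)]
  have o : ∀ s r, |∫ u in (0:ℝ)..t₁, O s r u| ≤
      (T ^ 3 + 3 * T ^ 2) * (1 / (1 + |a + s * b + r * c|)) :=
    fun s r => osc_bound T t₁ _ _ h0 hT
  have o11 := o 1 1
  have o12 := o 1 (-1)
  have o21 := o (-1) 1
  have o22 := o (-1) (-1)
  set P11 := 1 / (1 + |a + 1 * b + 1 * c|)
  set P12 := 1 / (1 + |a + 1 * b + (-1) * c|) with hP12
  set P21 := 1 / (1 + |a + (-1) * b + 1 * c|) with hP21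
  set P22 := 1 / (1 + |a + (-1) * b + (-1) * c|)
  have p11 : 0 ≤ P11 := by positivity
  have p12 : 0 ≤ P12 := by positivity
  have p21 : 0 ≤ P21 := by positivity
  have p22 : 0 ≤ P22 := by positivity
  have hb1 : 1 / b ≤ 3 * P12 := by
    rw [hP12, mul_one_div, div_le_div_iff₀ hb0 (by positivity), abs_of_nonneg (by linarith)]
    linarith
  have hc1 : 1 / c ≤ 3 * P21 := by
    rw [hP21, mul_one_div, div_le_div_iff₀ hc0 (by positivity), abs_of_nonneg (by linarith)]
    linarith
  have hRb : |∫ u in (0:ℝ)..t₁, R u| ≤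
      1 / a * ((T + 1) * (1 / (b ^ 2 * c ^ 2)) * (1 / b + 1 / c)) * T := by
    have := intervalIntegral.norm_integral_le_of_norm_le_const (a := 0) (b := t₁)
      (C := 1 / a * ((T + 1) * (1 / (b ^ 2 * c ^ 2)) * (1 / b + 1 / c))) (f := R) (by
        intro u hu
        rw [Set.uIoc_of_le h0] at hu
        rw [hR, Real.norm_eq_abs, abs_mul]
        have hu0 : 0 ≤ u := hu.1.le
        have huT : u ≤ T := hu.2.trans hT
        have hm : ∀ z y : ℝ, 0 < z → |u * Real.cos y / (2 * z ^ 2)| ≤ T / (2 * z ^ 2) := by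
          intro z y hz
          rw [abs_div, abs_of_pos (by positivity : 0 < 2 * z ^ 2), abs_mul, abs_of_nonneg hu0]
          gcongr
          calc u * |Real.cos y| ≤ u * 1 := by gcongr; exact Real.abs_cos_le_one _
            _ ≤ T := by linarith
        apply mul_le_mul _ _ (abs_nonneg _) (by positivity)
        · rw [abs_div, abs_of_pos ha0]
          gcongr
          exact Real.abs_sin_le_one _
        · exact rest_bound T b c _ _ _ _ hT0 hb hc (hm _ _ hb0) (hm _ _ hc0)
            (sigE_abs _ _ _ hb0) (sigE_abs _ _ _ hc0))
    rw [Real.norm_eq_abs, sub_zero, abs_of_nonneg h0] at this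
    refine this.trans ?_
    gcongr
  refine (abs_add_le _ _).trans ?_
  rw [abs_mul, abs_of_pos (by positivity : 0 < 1 / (16 * a * b ^ 2 * c ^ 2))]
  set Q := 1 / (b ^ 2 * c ^ 2) with hQ
  have hQ0 : 0 < Q := by positivity
  have hmain : 1 / (16 * a * b ^ 2 * c ^ 2) * |(((∫ u in (0:ℝ)..t₁, O 1 1 u) +
      ∫ u in (0:ℝ)..t₁, O 1 (-1) u) + ∫ u in (0:ℝ)..t₁, O (-1) 1 u) + ∫ u in (0:ℝ)..t₁, O (-1) (-1) u|
      ≤ 1 / a * Q * ((T ^ 3 + 3 * T ^ 2) * (P11 + P12 + P21 + P22)) := by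
    have e : 1 / (16 * a * b ^ 2 * c ^ 2) ≤ 1 / a * Q := by
      rw [hQ, one_div_mul_one_div]
      apply one_div_le_one_div_of_le (by positivity)
      have : 0 < a * (b ^ 2 * c ^ 2) := by positivity
      nlinarith
    apply mul_le_mul e _ (abs_nonneg _) (by positivity)
    have h1 := abs_add_le ((((∫ u in (0:ℝ)..t₁, O 1 1 u) +
      ∫ u in (0:ℝ)..t₁, O 1 (-1) u) + ∫ u in (0:ℝ)..t₁, O (-1) 1 u)) (∫ u in (0:ℝ)..t₁, O (-1) (-1) u)
    have h2 := abs_add_le ((∫ u in (0:ℝ)..t₁, O 1 1 u) +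
      ∫ u in (0:ℝ)..t₁, O 1 (-1) u) (∫ u in (0:ℝ)..t₁, O (-1) 1 u)
    have h3 := abs_add_le (∫ u in (0:ℝ)..t₁, O 1 1 u) (∫ u in (0:ℝ)..t₁, O 1 (-1) u)
    linarith
  have hrest : 1 / a * ((T + 1) * Q * (1 / b + 1 / c)) * T ≤
      1 / a * Q * ((3 * T ^ 2 + 3 * T) * (P11 + P12 + P21 + P22)) := by
    have e : 1 / a * ((T + 1) * Q * (1 / b + 1 / c)) * T =
      1 / a * Q * (((T + 1) * T) * (1 / b + 1 / c)) := by ring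
    rw [e]
    have : ((T + 1) * T) * (1 / b + 1 / c) ≤ ((T + 1) * T) * (3 * (P11 + P12 + P21 + P22)) := by
      gcongr; linarith
    calc _ ≤ 1 / a * Q * (((T + 1) * T) * (3 * (P11 + P12 + P21 + P22))) := by gcongr
      _ = _ := by ring
  refine (add_le_add hmain (hRb.trans hrest)).trans (le_of_eq ?_)
  ring

lemma pairing_bound (T : ℝ) (n x : Fin 3 → ℤ) (t : ℝ) (h0 : 0 ≤ t) (hT : t ≤ T) :
    |pairingTerm n t x| ≤ T * (T ^ 3 + 6 * T ^ 2 + 3 * T) / jb n ^ 2 *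
      (FF 1 1 n x + FF 1 (-1) n x + FF (-1) 1 n x + FF (-1) (-1) n x) := by
  have hT0 : 0 ≤ T := h0.trans hT
  have ha : 0 < jb n := lt_of_lt_of_le one_pos (one_le_jb n)
  set S := FF 1 1 n x + FF 1 (-1) n x + FF (-1) 1 n x + FF (-1) (-1) n x with hS
  have hS0 : 0 ≤ S := by rw [hS]; unfold FF; positivity
  unfold pairingTerm
  have := intervalIntegral.norm_integral_le_of_norm_le_const (a := 0) (b := t)
      (C := 1 / jb n * ((T ^ 3 + 6 * T ^ 2 + 3 * T) / jb n * S))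
      (f := fun t₁' => (Real.sin ((t - t₁') * jb n) / jb n) *
        ∫ t₂' in (0:ℝ)..t₁', (Real.sin ((t - t₂') * jb n) / jb n) *
      (sigK x t₁' t₂' * sigK (n - x) t₁' t₂')) (by
        intro u hu
        rw [Set.uIoc_of_le h0] at hu
        rw [Real.norm_eq_abs, abs_mul]
        apply mul_le_mul _ (inner_bound T n x t u hu.1.le (hu.2.trans hT)) (abs_nonneg _) (by positivity)
        rw [abs_div, abs_of_pos ha]
        gcongr
        exact Real.abs_sin_le_one _)
  rw [Real.norm_eq_abs, sub_zero, abs_of_nonneg h0] at this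
  refine this.trans ?_
  calc _ ≤ 1 / jb n * ((T ^ 3 + 6 * T ^ 2 + 3 * T) / jb n * S) * T := by gcongr
    _ = _ := by field_simp

lemma int_sum_fin (p : ℝ) (hp : 1 < p) :
    ∑' m : ℤ, ENNReal.ofReal ((1 + |(m : ℝ)|) ^ (-p)) ≠ ⊤ := by
  have hs : Summable (fun m : ℤ => (1 + |(m : ℝ)|) ^ (-p)) := by
    have h1 : Summable (fun m : ℤ => |(m : ℝ)| ^ (-p) + (if m = 0 then (1 : ℝ) else 0)) :=
      (Real.summable_abs_int_rpow hp).add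
        (summable_of_ne_finset_zero (s := {0}) (by intro b hb; simpa using hb))
    refine Summable.of_nonneg_of_le (fun m => by positivity) ?_ h1
    intro m
    by_cases hm : m = 0
    · subst hm
      simp only [Int.cast_zero, abs_zero, add_zero, Real.one_rpow, if_true]
      have : (0 : ℝ) ≤ (0 : ℝ) ^ (-p) := Real.rpow_nonneg le_rfl _
      linarith
    · rw [if_neg hm, add_zero]
      have : 0 < |(m : ℝ)| := abs_pos.2 (by exact_mod_cast hm)
      exact Real.rpow_le_rpow_of_nonpos this (by linarith) (by linarith)
  exact hs.tsum_ofReal_ne_top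

lemma shift_sum_int (p : ℝ) (hp : 1 < p) (y : ℝ) :
    ∑' k : ℤ, ENNReal.ofReal ((1 + |(k : ℝ) + y|) ^ (-p)) ≤
      ENNReal.ofReal (2 ^ p) * ∑' m : ℤ, ENNReal.ofReal ((1 + |(m : ℝ)|) ^ (-p)) := by
  rw [← ENNReal.tsum_mul_left,
    ← (Equiv.addRight ⌊y⌋).tsum_eq (fun m : ℤ => ENNReal.ofReal (2 ^ p) *
      ENNReal.ofReal ((1 + |(m : ℝ)|) ^ (-p)))]
  apply ENNReal.tsum_le_tsum
  intro k
  rw [← ENNReal.ofReal_mul (by positivity)]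
  apply ENNReal.ofReal_le_ofReal
  simp only [Equiv.coe_addRight, Int.cast_add]
  have h1 : 0 ≤ y - ⌊y⌋ := by linarith [Int.floor_le y]
  have h2 : y - ⌊y⌋ < 1 := by linarith [Int.lt_floor_add_one y]
  have h3 : |(k : ℝ) + ⌊y⌋| ≤ |(k : ℝ) + y| + 1 := by
    have := abs_sub ((k : ℝ) + y) (y - ⌊y⌋)
    rw [abs_of_nonneg h1] at this
    have e : (k : ℝ) + y - (y - ⌊y⌋) = k + ⌊y⌋ := by ring
    rw [e] at this
    linarith
  have h4 : (1 + |(k : ℝ) + ⌊y⌋|) / 2 ≤ 1 + |(k : ℝ) + y| := by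
    linarith [abs_nonneg ((k : ℝ) + y)]
  have h5 := Real.rpow_le_rpow_of_nonpos (by positivity) h4 (by linarith : -p ≤ 0)
  refine h5.trans (le_of_eq ?_)
  rw [Real.div_rpow (by positivity) (by norm_num), Real.rpow_neg (by norm_num : (0:ℝ) ≤ 2) p]
  field_simp

lemma shift_sum (p : ℝ) (hp : 1 < p) : ∃ K : ENNReal, K ≠ ⊤ ∧ ∀ y r : ℝ, |r| = 1 →
    ∑' k : ℕ, ENNReal.ofReal ((1 + |y + r * k|) ^ (-p)) ≤ K := by
  refine ⟨ENNReal.ofReal (2 ^ p) * ∑' m : ℤ, ENNReal.ofReal ((1 + |(m : ℝ)|) ^ (-p)),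
    ENNReal.mul_ne_top ENNReal.ofReal_ne_top (int_sum_fin p hp), ?_⟩
  intro y r hr
  refine le_trans ?_ (shift_sum_int p hp (r * y))
  refine le_trans (le_of_eq ?_) (ENNReal.tsum_comp_le_tsum_of_injective
    (Nat.cast_injective (R := ℤ)) (fun k : ℤ => ENNReal.ofReal ((1 + |(k : ℝ) + r * y|) ^ (-p))))
  apply tsum_congr
  intro k
  simp only [Int.cast_natCast]
  have : |y + r * k| = |(k : ℝ) + r * y| := by
    rcases eq_or_eq_neg_of_abs_eq hr with h | h
    · subst h; congr 1; ring
    · subst h; rw [← abs_neg]; congr 1; ring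
  rw [this]

lemma key_half (δ a J K Q : ℝ) (hδ0 : 0 < δ) (hδ1 : δ ≤ 1) (ha : 0 < a) (hJ : 1 ≤ J) (hQ : 1 ≤ Q)
    (hJK : J ≤ K) (haK : a ≤ 4 * K) :
    1 / (J * K * Q) ≤ 4 * a ^ (-1 + δ) * (J ^ (-(1 + δ / 2)) *
      (K ^ (-(1 + δ / 2)) + Q ^ (-(1 + δ / 2)))) := by
  have hJ0 : 0 < J := by linarith
  have hK0 : 0 < K := by linarith
  have hQ0 : 0 < Q := by linarith
  have h1 : K ^ (-1 + δ) ≤ 4 * a ^ (-1 + δ) := by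
    have h := Real.rpow_le_rpow_of_nonpos (by positivity : 0 < a / 4)
      (by linarith : a / 4 ≤ K) (by linarith : -1 + δ ≤ 0)
    refine h.trans ?_
    rw [Real.div_rpow ha.le (by norm_num), div_eq_mul_inv, ← Real.rpow_neg (by norm_num), mul_comm]
    gcongr
    calc (4:ℝ) ^ (-(-1 + δ)) ≤ (4:ℝ) ^ (1:ℝ) :=
          Real.rpow_le_rpow_of_exponent_le (by norm_num) (by linarith)
      _ = 4 := by simp
  have h2 : K ^ (-(δ / 2)) ≤ J ^ (-(δ / 2)) :=
    Real.rpow_le_rpow_of_nonpos hJ0 hJK (by linarith)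
  have h3 : K ^ (-(δ / 2)) * Q ^ (-1 : ℝ) ≤ K ^ (-(1 + δ / 2)) + Q ^ (-(1 + δ / 2)) := by
    rcases le_total K Q with h | h
    · have : Q ^ (-1 : ℝ) ≤ K ^ (-1 : ℝ) := Real.rpow_le_rpow_of_nonpos hK0 h (by norm_num)
      have e : K ^ (-(1 + δ / 2)) = K ^ (-(δ / 2)) * K ^ (-1 : ℝ) := by
        rw [← Real.rpow_add hK0]; congr 1; ring
      have h4 : 0 ≤ Q ^ (-(1 + δ / 2)) := by positivity
      rw [e]
      have : K ^ (-(δ / 2)) * Q ^ (-1 : ℝ) ≤ K ^ (-(δ / 2)) * K ^ (-1 : ℝ) := by gcongr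
      linarith
    · have : K ^ (-(δ / 2)) ≤ Q ^ (-(δ / 2)) :=
        Real.rpow_le_rpow_of_nonpos hQ0 h (by linarith)
      have e : Q ^ (-(1 + δ / 2)) = Q ^ (-(δ / 2)) * Q ^ (-1 : ℝ) := by
        rw [← Real.rpow_add hQ0]; congr 1; ring
      have h4 : 0 ≤ K ^ (-(1 + δ / 2)) := by positivity
      rw [e]
      have : K ^ (-(δ / 2)) * Q ^ (-1 : ℝ) ≤ Q ^ (-(δ / 2)) * Q ^ (-1 : ℝ) := by gcongr
      linarith
  have e1 : 1 / (J * K * Q) = J ^ (-1 : ℝ) * (K ^ (-1 + δ) * (K ^ (-(δ / 2)) *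
      (K ^ (-(δ / 2)) * Q ^ (-1 : ℝ)))) := by
    have : K ^ (-1 : ℝ) = K ^ (-1 + δ) * K ^ (-(δ / 2)) * K ^ (-(δ / 2)) := by
      rw [← Real.rpow_add hK0, ← Real.rpow_add hK0]; congr 1; ring
    rw [show J ^ (-1 : ℝ) * (K ^ (-1 + δ) * (K ^ (-(δ / 2)) * (K ^ (-(δ / 2)) * Q ^ (-1 : ℝ))))
      = J ^ (-1 : ℝ) * (K ^ (-1 + δ) * K ^ (-(δ / 2)) * K ^ (-(δ / 2))) * Q ^ (-1 : ℝ) by ring, ← this,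
      Real.rpow_neg_one, Real.rpow_neg_one, Real.rpow_neg_one]
    field_simp
  have e2 : J ^ (-(1 + δ / 2)) = J ^ (-1 : ℝ) * J ^ (-(δ / 2)) := by
    rw [← Real.rpow_add hJ0]; congr 1; ring
  rw [e1, e2]
  calc _ ≤ J ^ (-1 : ℝ) * ((4 * a ^ (-1 + δ)) * (J ^ (-(δ / 2)) *
      (K ^ (-(1 + δ / 2)) + Q ^ (-(1 + δ / 2))))) := by gcongr
    _ = _ := by ring

lemma key_full (δ a J K Q : ℝ) (hδ0 : 0 < δ) (hδ1 : δ ≤ 1) (ha : 0 < a) (hJ : 1 ≤ J) (hK : 1 ≤ K)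
    (hQ : 1 ≤ Q) (haK : a ≤ 2 * (J + K)) :
    1 / (J * K * Q) ≤ 4 * a ^ (-1 + δ) * (J ^ (-(1 + δ / 2)) *
      (K ^ (-(1 + δ / 2)) + Q ^ (-(1 + δ / 2))) + K ^ (-(1 + δ / 2)) *
      (J ^ (-(1 + δ / 2)) + Q ^ (-(1 + δ / 2)))) := by
  rw [mul_add]
  have hJ0 : 0 < J := by linarith
  have hK0 : 0 < K := by linarith
  have hQ0 : 0 < Q := by linarith
  rcases le_total J K with h | h
  · have := key_half δ a J K Q hδ0 hδ1 ha hJ hQ h (by linarith)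
    have h2 : 0 ≤ 4 * a ^ (-1 + δ) * (K ^ (-(1 + δ / 2)) *
      (J ^ (-(1 + δ / 2)) + Q ^ (-(1 + δ / 2)))) := by positivity
    linarith
  · have := key_half δ a K J Q hδ0 hδ1 ha hK hQ h (by linarith)
    have h2 : 0 ≤ 4 * a ^ (-1 + δ) * (J ^ (-(1 + δ / 2)) *
      (K ^ (-(1 + δ / 2)) + Q ^ (-(1 + δ / 2)))) := by positivity
    rw [mul_comm K J] at this
    linarith

/-- Dominating function on `ℕ × ℕ`. -/
noncomputable def GG (p a s r : ℝ) (q : ℕ × ℕ) : ℝ :=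
  (q.1 : ℝ) ^ (-p) * ((q.2 : ℝ) ^ (-p) + (1 + |a + s * q.1 + r * q.2|) ^ (-p)) +
  (q.2 : ℝ) ^ (-p) * ((q.1 : ℝ) ^ (-p) + (1 + |a + s * q.1 + r * q.2|) ^ (-p))

lemma GG_sum (p : ℝ) (hp : 1 < p) : ∃ L : ENNReal, L ≠ ⊤ ∧ ∀ a s r : ℝ, |s| = 1 → |r| = 1 →
    ∑' q : ℕ × ℕ, ENNReal.ofReal (GG p a s r q) ≤ L := by
  obtain ⟨K, hK, hKb⟩ := shift_sum p hp
  set W := ∑' k : ℕ, ENNReal.ofReal ((k : ℝ) ^ (-p)) with hW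
  have hWf : W ≠ ⊤ := by
    have : Summable (fun k : ℕ => (k : ℝ) ^ (-p)) := Real.summable_nat_rpow.2 (by linarith)
    exact this.tsum_ofReal_ne_top
  refine ⟨W * (W + K) + W * (W + K), by finiteness, ?_⟩
  intro a s r hs hr
  have e : ∀ q : ℕ × ℕ, ENNReal.ofReal (GG p a s r q) =
    ENNReal.ofReal ((q.1 : ℝ) ^ (-p)) * (ENNReal.ofReal ((q.2 : ℝ) ^ (-p)) +
      ENNReal.ofReal ((1 + |a + s * q.1 + r * q.2|) ^ (-p))) +
    ENNReal.ofReal ((q.2 : ℝ) ^ (-p)) * (ENNReal.ofReal ((q.1 : ℝ) ^ (-p)) +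
      ENNReal.ofReal ((1 + |a + s * q.1 + r * q.2|) ^ (-p))) := by
    intro q
    unfold GG
    rw [ENNReal.ofReal_add (by positivity) (by positivity), ENNReal.ofReal_mul (by positivity),
      ENNReal.ofReal_mul (by positivity), ENNReal.ofReal_add (by positivity) (by positivity),
      ENNReal.ofReal_add (by positivity) (by positivity)]
  simp only [e]
  rw [ENNReal.tsum_add]
  apply add_le_add
  · rw [ENNReal.tsum_prod (f := fun j k : ℕ => ENNReal.ofReal ((j : ℝ) ^ (-p)) *
      (ENNReal.ofReal ((k : ℝ) ^ (-p)) + ENNReal.ofReal ((1 + |a + s * j + r * k|) ^ (-p))))]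
    rw [hW, ← ENNReal.tsum_mul_right]
    apply ENNReal.tsum_le_tsum
    intro j
    rw [ENNReal.tsum_mul_left, ENNReal.tsum_add]
    gcongr
    exact hKb _ _ hr
  · rw [ENNReal.tsum_prod (f := fun j k : ℕ => ENNReal.ofReal ((k : ℝ) ^ (-p)) *
      (ENNReal.ofReal ((j : ℝ) ^ (-p)) + ENNReal.ofReal ((1 + |a + s * j + r * k|) ^ (-p)))),
      ENNReal.tsum_comm]
    rw [hW, ← ENNReal.tsum_mul_right]
    apply ENNReal.tsum_le_tsum
    intro k
    rw [ENNReal.tsum_mul_left, ENNReal.tsum_add]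
    gcongr
    have := hKb (a + r * k) s hs
    refine le_trans (le_of_eq ?_) this
    apply tsum_congr
    intro j
    congr 4
    ring

lemma FF_floor (s r : ℝ) (hs : |s| = 1) (hr : |r| = 1) (n x : Fin 3 → ℤ) (j k : ℕ)
    (hj : 1 ≤ j) (hk : 1 ≤ k) (h1 : ⌊jb x⌋₊ = j) (h2 : ⌊jb (n - x)⌋₊ = k) :
    FF s r n x ≤ 3 / ((j : ℝ) ^ 2 * (k : ℝ) ^ 2 * (1 + |jb n + s * j + r * k|)) := by
  rw [Nat.floor_eq_iff (jb_nonneg _)] at h1 h2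
  have hj' : (1 : ℝ) ≤ j := by exact_mod_cast hj
  have hk' : (1 : ℝ) ≤ k := by exact_mod_cast hk
  unfold FF
  set a := jb n
  set b := jb x
  set c := jb (n - x)
  have hQ : 1 + |a + s * j + r * k| ≤ 3 * (1 + |a + s * b + r * c|) := by
    have e : a + s * j + r * k = (a + s * b + r * c) + s * (j - b) + r * (k - c) := by ring
    have h3 := abs_add_le ((a + s * b + r * c) + s * (j - b)) (r * (k - c))
    have h4 := abs_add_le (a + s * b + r * c) (s * (j - b))
    have h5 : |s * (j - b)| ≤ 1 := by
      rw [abs_mul, hs, one_mul, abs_le]; constructor <;> linarith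
    have h6 : |r * (k - c)| ≤ 1 := by
      rw [abs_mul, hr, one_mul, abs_le]; constructor <;> linarith
    rw [e]
    linarith [abs_nonneg (a + s * b + r * c)]
  have e : 3 / ((j : ℝ) ^ 2 * (k : ℝ) ^ 2 * (1 + |a + s * j + r * k|)) =
    1 / ((j : ℝ) ^ 2 * (k : ℝ) ^ 2) * (3 / (1 + |a + s * j + r * k|)) := by
    field_simp
  rw [e]
  have hb1 : (j : ℝ) ≤ b := h1.1
  have hc1 : (k : ℝ) ≤ c := h2.1
  apply mul_le_mul _ _ (by positivity) (by positivity)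
  · gcongr
  · rw [div_le_div_iff₀ (by positivity) (by positivity)]
    linarith

lemma lattice_sum (δ : ℝ) (hδ0 : 0 < δ) (hδ1 : δ ≤ 1) : ∃ C : ℝ, 0 < C ∧
    ∀ n : Fin 3 → ℤ, n ≠ 0 → ∀ s r : ℝ, |s| = 1 → |r| = 1 →
      ∑' x, ENNReal.ofReal (FF s r n x) ≤ ENNReal.ofReal (C * jb n ^ (-2 + δ)) := by
  obtain ⟨L, hL, hLb⟩ := GG_sum (1 + δ / 2) (by linarith)
  refine ⟨6144 * Real.pi * (L.toReal + 1), by positivity, ?_⟩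
  intro n hn s r hs hr
  have ha := one_le_jb n
  have ha0 : 0 < jb n := by linarith
  rw [← ENNReal.tsum_fiberwise (fun x => ENNReal.ofReal (FF s r n x))
    (fun x => (⌊jb x⌋₊, ⌊jb (n - x)⌋₊))]
  have hterm : ∀ q : ℕ × ℕ, ∑' x : (fun x => (⌊jb x⌋₊, ⌊jb (n - x)⌋₊)) ⁻¹' {q},
      ENNReal.ofReal (FF s r n x) ≤ ENNReal.ofReal (6144 * Real.pi * jb n ^ (-2 + δ)) *
        ENNReal.ofReal (GG (1 + δ / 2) (jb n) s r q) := by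
    rintro ⟨j, k⟩
    have hset : (fun x => (⌊jb x⌋₊, ⌊jb (n - x)⌋₊)) ⁻¹' {(j, k)} =
        {x : Fin 3 → ℤ | ⌊jb x⌋₊ = j ∧ ⌊jb (n - x)⌋₊ = k} := by
      ext x; simp
    rw [hset]
    set S := {x : Fin 3 → ℤ | ⌊jb x⌋₊ = j ∧ ⌊jb (n - x)⌋₊ = k} with hS
    rcases Set.eq_empty_or_nonempty S with he | ⟨x0, hx1, hx2⟩
    · rw [he]; simp
    have hj : 1 ≤ j := by
      rw [← hx1]; exact Nat.le_floor (by exact_mod_cast one_le_jb x0)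
    have hk : 1 ≤ k := by
      rw [← hx2]; exact Nat.le_floor (by exact_mod_cast one_le_jb _)
    have hj' : (1 : ℝ) ≤ j := by exact_mod_cast hj
    have hk' : (1 : ℝ) ≤ k := by exact_mod_cast hk
    have hmax : jb n ≤ 2 * (j + k) := by
      rw [Nat.floor_eq_iff (jb_nonneg _)] at hx1 hx2
      linarith [jb_tri1 n x0]
    have h1 : ∑' x : S, ENNReal.ofReal (FF s r n x) ≤ ∑' _x : S,
        ENNReal.ofReal (3 / ((j : ℝ) ^ 2 * (k : ℝ) ^ 2 * (1 + |jb n + s * j + r * k|))) := by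
      apply ENNReal.tsum_le_tsum
      rintro ⟨x, hx⟩
      exact ENNReal.ofReal_le_ofReal (FF_floor s r hs hr n x j k hj hk hx.1 hx.2)
    refine h1.trans ?_
    rw [ENNReal.tsum_set_const]
    refine (mul_le_mul_left (count n hn j k hj hk) _).trans ?_
    rw [← ENNReal.ofReal_mul (by positivity), ← ENNReal.ofReal_mul (by positivity)]
    apply ENNReal.ofReal_le_ofReal
    have hnn : jb n / 2 ≤ ‖emb n‖ := by
      have := jb_le n
      have := one_le_norm_emb n hn
      linarith
    have hkey := key_full δ (jb n) j k (1 + |jb n + s * j + r * k|) hδ0 hδ1 ha0 hj' hk'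
      (by linarith [abs_nonneg (jb n + s * j + r * k)]) hmax
    have h2 : 256 * Real.pi * j * k / ‖emb n‖ ≤ 256 * Real.pi * j * k / (jb n / 2) := by
      gcongr
    have hpi := Real.pi_pos
    calc _ ≤ 256 * Real.pi * j * k / (jb n / 2) *
          (3 / ((j : ℝ) ^ 2 * (k : ℝ) ^ 2 * (1 + |jb n + s * j + r * k|))) := by gcongr
      _ = 1536 * Real.pi * jb n ^ (-1 : ℝ) * (1 / (j * k * (1 + |jb n + s * j + r * k|))) := by
          rw [Real.rpow_neg_one]; field_simp; ring
      _ ≤ 1536 * Real.pi * jb n ^ (-1 : ℝ) * (4 * jb n ^ (-1 + δ) *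
          GG (1 + δ / 2) (jb n) s r (j, k)) := by
          gcongr
          exact hkey
      _ = 6144 * Real.pi * (jb n ^ (-1 : ℝ) * jb n ^ (-1 + δ)) *
          GG (1 + δ / 2) (jb n) s r (j, k) := by ring
      _ = _ := by
          rw [← Real.rpow_add ha0]; congr 3; ring
  refine (ENNReal.tsum_le_tsum hterm).trans ?_
  rw [ENNReal.tsum_mul_left]
  refine (mul_le_mul_right (hLb _ s r hs hr) _).trans ?_
  have : L ≤ ENNReal.ofReal (L.toReal + 1) := by
    conv_lhs => rw [← ENNReal.ofReal_toReal hL]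
    exact ENNReal.ofReal_le_ofReal (by linarith)
  refine (mul_le_mul_right this _).trans ?_
  rw [← ENNReal.ofReal_mul (by positivity)]
  apply ENNReal.ofReal_le_ofReal
  apply le_of_eq; ring

lemma FF_nonneg (s r : ℝ) (n x : Fin 3 → ℤ) : 0 ≤ FF s r n x := by
  unfold FF; positivity

lemma FF_zero (s r : ℝ) (x : Fin 3 → ℤ) : FF s r 0 x ≤ 36 * FF 1 (-1) ![1, 0, 0] x := by
  have h0 : jb ((0 : Fin 3 → ℤ) - x) = jb x := by rw [zero_sub, jb_neg]
  have he : jb ![1, 0, 0] ≤ 3 / 2 := by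
    unfold jb
    rw [Real.sqrt_le_left (by norm_num)]
    simp [Fin.sum_univ_three]; norm_num
  have t1 := jb_tri2 ![1, 0, 0] x
  have t2 := jb_tri3 ![1, 0, 0] x
  have hb := one_le_jb x
  have hc := one_le_jb (![1, 0, 0] - x)
  have he1 := one_le_jb ![1, 0, 0]
  unfold FF
  rw [h0]
  set e := jb ![1, 0, 0]
  set c := jb (![1, 0, 0] - x)
  set b := jb x
  have hb0 : 0 < b := by linarith
  have hc0 : 0 < c := by linarith
  have h1 : 1 / (1 + |jb 0 + s * b + r * b|) ≤ 1 := by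
    rw [div_le_one (by positivity)]
    linarith [abs_nonneg (jb 0 + s * b + r * b)]
  have h2 : 1 / 4 ≤ 1 / (1 + |e + 1 * b + -1 * c|) := by
    apply one_div_le_one_div_of_le (by positivity)
    rw [abs_of_nonneg (by linarith)]; linarith
  have h3 : 1 / (b ^ 2 * b ^ 2) ≤ 9 * (1 / (b ^ 2 * c ^ 2)) := by
    rw [mul_one_div, div_le_div_iff₀ (by positivity) (by positivity)]
    have : c ^ 2 ≤ (3 * b) ^ 2 := pow_le_pow_left₀ hc0.le (by linarith) 2
    have h4 : 0 < b ^ 2 := by positivity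
    nlinarith
  calc _ ≤ 1 / (b ^ 2 * b ^ 2) * 1 := by gcongr
    _ ≤ 9 * (1 / (b ^ 2 * c ^ 2)) * (4 * (1 / (1 + |e + 1 * b + -1 * c|))) := by
        apply mul_le_mul h3 _ (by norm_num) (by positivity)
        linarith
    _ = _ := by ring

lemma lattice_sum' (δ : ℝ) (hδ0 : 0 < δ) (hδ1 : δ ≤ 1) : ∃ C : ℝ, 0 < C ∧
    ∀ n : Fin 3 → ℤ, ∀ s r : ℝ, |s| = 1 → |r| = 1 →
      ∑' x, ENNReal.ofReal (FF s r n x) ≤ ENNReal.ofReal (C * jb n ^ (-2 + δ)) := by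
  obtain ⟨C, hC, h⟩ := lattice_sum δ hδ0 hδ1
  refine ⟨36 * C, by positivity, ?_⟩
  intro n s r hs hr
  by_cases hn : n = 0
  · subst hn
    have h1 := h ![1, 0, 0] (by intro h; simpa using congrFun h 0) 1 (-1) (by simp) (by simp)
    have h2 : ∑' x, ENNReal.ofReal (FF s r 0 x) ≤
        ENNReal.ofReal 36 * ∑' x, ENNReal.ofReal (FF 1 (-1) ![1, 0, 0] x) := by
      rw [← ENNReal.tsum_mul_left]
      apply ENNReal.tsum_le_tsum
      intro x
      rw [← ENNReal.ofReal_mul (by norm_num)]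
      exact ENNReal.ofReal_le_ofReal (FF_zero s r x)
    refine h2.trans ((mul_le_mul_right h1 _).trans ?_)
    rw [← ENNReal.ofReal_mul (by norm_num)]
    apply ENNReal.ofReal_le_ofReal
    have e0 : jb 0 = 1 := by simp [jb]
    rw [e0, Real.one_rpow, mul_one]
    have : jb ![1, 0, 0] ^ (-2 + δ) ≤ 1 :=
      Real.rpow_le_one_of_one_le_of_nonpos (one_le_jb _) (by linarith)
    nlinarith
  · refine (h n hn s r hs hr).trans (ENNReal.ofReal_le_ofReal ?_)
    have : 0 < jb n := lt_of_lt_of_le one_pos (one_le_jb n)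
    gcongr
    linarith

lemma real_of_ennreal {ι : Type*} (f : ι → ℝ) (hf : ∀ x, 0 ≤ f x) (B : ℝ) (hB : 0 ≤ B)
    (h : ∑' x, ENNReal.ofReal (f x) ≤ ENNReal.ofReal B) : Summable f ∧ ∑' x, f x ≤ B := by
  have hs : Summable f := by
    have := ENNReal.summable_toReal (h.trans_lt ENNReal.ofReal_lt_top).ne
    simpa [ENNReal.toReal_ofReal (hf _)] using this
  refine ⟨hs, ?_⟩
  rw [← ENNReal.ofReal_tsum_of_nonneg hf hs] at h
  exact (ENNReal.ofReal_le_ofReal_iff hB).1 h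

theorem second_order_object_extra_smoothing
    (T : ℝ) (hT : 0 < T) (δ : ℝ) (hδ0 : 0 < δ) (hδ1 : δ ≤ 1) :
    ∃ C : ℝ, 0 < C ∧ ∀ (n : Fin 3 → ℤ) (t : ℝ), t ∈ Set.Icc 0 T →
      Summable (fun n₁ : Fin 3 → ℤ =>
        if n₁ ≠ n - n₁ ∧ n₁ ≠ -(n - n₁) then pairingTerm n t n₁ else 0) ∧
      |∑' n₁ : Fin 3 → ℤ,
          (if n₁ ≠ n - n₁ ∧ n₁ ≠ -(n - n₁) then pairingTerm n t n₁ else 0)|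
        ≤ C * jb n ^ (-4 + δ) := by
  obtain ⟨C, hC, h⟩ := lattice_sum' δ hδ0 hδ1
  refine ⟨T * (T ^ 3 + 6 * T ^ 2 + 3 * T) * (4 * C), by positivity, ?_⟩
  intro n t ht
  have ha : 0 < jb n := lt_of_lt_of_le one_pos (one_le_jb n)
  have hF : ∀ s r : ℝ, |s| = 1 → |r| = 1 → Summable (FF s r n) ∧
      ∑' x, FF s r n x ≤ C * jb n ^ (-2 + δ) := fun s r hs hr =>
    real_of_ennreal _ (FF_nonneg s r n) _ (by positivity) (h n s r hs hr)
  obtain ⟨s1, b1⟩ := hF 1 1 (by simp) (by simp)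
  obtain ⟨s2, b2⟩ := hF 1 (-1) (by simp) (by simp)
  obtain ⟨s3, b3⟩ := hF (-1) 1 (by simp) (by simp)
  obtain ⟨s4, b4⟩ := hF (-1) (-1) (by simp) (by simp)
  set D := T * (T ^ 3 + 6 * T ^ 2 + 3 * T) / jb n ^ 2 with hD
  have hD0 : 0 ≤ D := by positivity
  have hsum : Summable (fun x => FF 1 1 n x + FF 1 (-1) n x + FF (-1) 1 n x + FF (-1) (-1) n x) :=
    ((s1.add s2).add s3).add s4
  have hle : ∀ x : Fin 3 → ℤ,
      ‖(if x ≠ n - x ∧ x ≠ -(n - x) then pairingTerm n t x else 0)‖ ≤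
      D * (FF 1 1 n x + FF 1 (-1) n x + FF (-1) 1 n x + FF (-1) (-1) n x) := by
    intro x
    split_ifs
    · rw [Real.norm_eq_abs]
      exact pairing_bound T n x t ht.1 ht.2
    · rw [norm_zero]
      exact mul_nonneg hD0 (add_nonneg (add_nonneg (add_nonneg (FF_nonneg _ _ _ _)
        (FF_nonneg _ _ _ _)) (FF_nonneg _ _ _ _)) (FF_nonneg _ _ _ _))
  have hsD := hsum.mul_left D
  refine ⟨Summable.of_norm_bounded hsD hle, ?_⟩
  have h1 := tsum_of_norm_bounded hsD.hasSum hle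
  rw [Real.norm_eq_abs] at h1
  refine h1.trans ?_
  rw [tsum_mul_left, ((s1.add s2).add s3).tsum_add s4, (s1.add s2).tsum_add s3, s1.tsum_add s2]
  calc _ ≤ D * (4 * (C * jb n ^ (-2 + δ))) := by gcongr; linarith
    _ = T * (T ^ 3 + 6 * T ^ 2 + 3 * T) * (4 * C) * (jb n ^ (-2 : ℝ) * jb n ^ (-2 + δ)) := by
        rw [hD, Real.rpow_neg ha.le, Real.rpow_two]; field_simp
    _ = _ := by
        rw [← Real.rpow_add ha]; congr 2; ring
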